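/- Let 𝐂 be the middle-third Cantor set, s = log 2 / log 3, ℋ^s the s-dimensional Hausdorff measure on ℝ, and ℛ = ⋃{𝐂 + k/3ⁿ : k, n ∈ ℤ}. On the Hilbert space H = L²(ℛ, ℋ^s|_ℛ) define the unitary operators (Uf)(x) = (1/√2) f(x/3) and (Tf)(x) = f(x − 1). Then the pair {U, T} is reducible: there exists a closed subspace K of H with K ≠ {0} and K ≠ H that is invariant under U, U⁻¹, T and T⁻¹; equivalently, there exists a bounded operator on H commuting with both U and T that is not a scalar multiple of the identity. -/

import Mathlib

open MeasureTheory

noncomputable section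

/-- The set `ℛ = ⋃_{k, n ∈ ℤ} (𝐂 + k/3ⁿ)` of all translates of the Cantor set by triadic
rationals. -/
def cantorTranslates : Set ℝ :=
  ⋃ (k : ℤ) (n : ℤ), (fun x : ℝ => x + (k : ℝ) / (3 : ℝ) ^ n) '' cantorSet

/-- The Hausdorff dimension `s = log 2 / log 3` of the Cantor set. -/
def cantorDim : ℝ := Real.log 2 / Real.log 3

/-- The `s`-dimensional Hausdorff measure restricted to `ℛ`. -/
def cantorMeasure : Measure ℝ :=
  (MeasureTheory.Measure.hausdorffMeasure cantorDim).restrict cantorTranslates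

/-!
Write `φ` for the normalised indicator of the Cantor set, `m₀(z) = (1 + z²) / √2` for its low-pass
filter and `S x = 3 x` on the circle. The translates `Tᵏ φ` are orthonormal, so `eᵏ ↦ Tᵏ φ` extends
to an isometry `J` of `L²` of the circle into `H` with `T J F = J (z F)` and
`U J F = J (m₀ · F ∘ S)`. Put `qₙ = ∏_{j < n} m₀ ∘ Sʲ`. The filter identity gives `∫ |qₙ|² = 1`,
whereas `∫ |qₙ| ≤ (2√2 / 3)ⁿ`, so `qₙ → 0` almost everywhere, and almost every orbit of `S` visits
the peak set `E = {x | ∀ k, |q_k x| ≤ 1}`.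

Let `P` be the set of points whose orbit first visits `E` in the upper half circle. Then `P` and
`S⁻¹ P` agree off `E`, and `x ↦ -x` exchanges `P` with its complement up to a null set, so that
`∫_P |qₙ|²` and `∫_{Pᶜ} |qₙ|²` both equal `1/2`. The vectors `f` for which the distance from `Uⁿ f`
to `J (L²(P))` tends to `0` form a closed invariant subspace, orthogonal to the one obtained from
`Pᶜ`. Both are nonzero: `U⁻ⁿ J (1_P qₙ)` is a Cauchy sequence of vectors of norm `1/√2`, because
`‖1_P qₙ₊₁ - m₀ · (1_P qₙ) ∘ S‖² ≤ ∫_E |qₙ₊₁|² ≤ ∫ |qₙ₊₁|`, and its limit lies in the subspace.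
-/

open Filter Topology Finset Function
open scoped ENNReal NNReal InnerProductSpace

section LowerLimit

variable {ι κ R E : Type*} [Semiring R] [AddCommMonoid E] [Module R E] [TopologicalSpace E]
  [ContinuousAdd E] [ContinuousConstSMul R E]

/-- The Kuratowski lower limit of a family of submodules along a filter: the points all of whose
neighbourhoods eventually meet the members of the family. -/
def lowerLimit (l : Filter ι) (V : ι → Submodule R E) : Submodule R E where
  carrier := {x | ∀ s ∈ 𝓝 x, ∀ᶠ i in l, ∃ v ∈ V i, v ∈ s}
  zero_mem' s hs := .of_forall fun i => ⟨0, (V i).zero_mem, mem_of_mem_nhds hs⟩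
  add_mem' {x y} hx hy s hs := by
    obtain ⟨a, ha, b, hb, hab⟩ := mem_nhds_prod_iff.mp (continuous_add.tendsto (x, y) hs)
    filter_upwards [hx a ha, hy b hb] with i ⟨v, hv, hva⟩ ⟨w, hw, hwb⟩
    exact ⟨v + w, (V i).add_mem hv hw, hab (Set.mk_mem_prod hva hwb)⟩
  smul_mem' c x hx s hs := by
    filter_upwards [hx _ ((continuous_const_smul c).tendsto x hs)] with i ⟨v, hv, hvs⟩
    exact ⟨c • v, (V i).smul_mem c hv, hvs⟩

theorem isClosed_lowerLimit (l : Filter ι) (V : ι → Submodule R E) :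
    IsClosed (lowerLimit l V : Set E) := by
  refine isClosed_iff_frequently.mpr fun x hx s hs => ?_
  obtain ⟨y, hy, hys⟩ := (hx.and_eventually (eventually_mem_nhds_iff.mpr hs)).exists
  exact hy s hys

theorem lowerLimit_map (l : Filter κ) (g : κ → ι) (V : ι → Submodule R E) :
    lowerLimit (l.map g) V = lowerLimit l (V ∘ g) :=
  rfl

theorem mem_lowerLimit_of_tendsto {l : Filter ι} {V : ι → Submodule R E} {v : ι → E} {x : E}
    (hv : ∀ i, v i ∈ V i) (hx : Tendsto v l (𝓝 x)) : x ∈ lowerLimit l V := fun s hs => by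
  filter_upwards [hx hs] with i hi using ⟨v i, hv i, hi⟩

theorem map_mem_lowerLimit {l : Filter ι} {V V' : ι → Submodule R E} {A : E → E}
    (hA : Continuous A) (hV : ∀ i, ∀ v ∈ V i, A v ∈ V' i) {x : E} (hx : x ∈ lowerLimit l V) :
    A x ∈ lowerLimit l V' := fun s hs => by
  filter_upwards [hx _ (hA.tendsto x hs)] with i ⟨v, hv, hvs⟩ using ⟨A v, hV i v hv, hvs⟩

end LowerLimit

theorem isOrtho_lowerLimit {ι 𝕜 E : Type*} [RCLike 𝕜] [NormedAddCommGroup E]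
    [InnerProductSpace 𝕜 E] {l : Filter ι} [l.NeBot] {V V' : ι → Submodule 𝕜 E}
    (h : ∀ i, V i ⟂ V' i) : lowerLimit l V ⟂ lowerLimit l V' := by
  refine Submodule.isOrtho_iff_inner_eq.mpr fun x hx y hy => not_not.mp fun hxy => ?_
  obtain ⟨a, ha, b, hb, hab⟩ := mem_nhds_prod_iff.mp
    ((continuous_inner (𝕜 := 𝕜)).continuousAt.eventually_ne (x := (x, y)) hxy)
  obtain ⟨i, ⟨v, hv, hva⟩, w, hw, hwb⟩ := ((hx a ha).and (hy b hb)).exists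
  exact hab (Set.mk_mem_prod hva hwb) (Submodule.isOrtho_iff_inner_eq.mp (h i) v hv w hw)

section AsymptoticSubspace

variable {𝕜 H : Type*} [RCLike 𝕜] [NormedAddCommGroup H] [InnerProductSpace 𝕜 H]
  {U T : H ≃ₗᵢ[𝕜] H} {W W' : Submodule 𝕜 H}

/-- The vectors `x` for which the distance from `Uⁿ x` to `W` tends to `0`, encoded as the lower
limit of the subspaces `U⁻ⁿ W`. -/
def asymptoticSubspace (U : H ≃ₗᵢ[𝕜] H) (W : Submodule 𝕜 H) : Submodule 𝕜 H :=
  lowerLimit atTop fun n : ℕ => W.comap (U ^ n).toLinearEquiv.toLinearMap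

theorem isClosed_asymptoticSubspace (U : H ≃ₗᵢ[𝕜] H) (W : Submodule 𝕜 H) :
    IsClosed (asymptoticSubspace U W : Set H) :=
  isClosed_lowerLimit _ _

theorem asymptoticSubspace_eq_lowerLimit_succ (U : H ≃ₗᵢ[𝕜] H) (W : Submodule 𝕜 H) :
    asymptoticSubspace U W =
      lowerLimit atTop fun n : ℕ => W.comap (U ^ (n + 1)).toLinearEquiv.toLinearMap := by
  conv_lhs => rw [asymptoticSubspace, ← map_add_atTop_eq_nat 1, lowerLimit_map]
  rfl

theorem map_mem_asymptoticSubspace {x : H} (hx : x ∈ asymptoticSubspace U W) :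
    U x ∈ asymptoticSubspace U W := by
  rw [asymptoticSubspace_eq_lowerLimit_succ] at hx
  exact map_mem_lowerLimit U.continuous (fun n v hv => by simpa [pow_succ] using hv) hx

theorem symm_map_mem_asymptoticSubspace {x : H} (hx : x ∈ asymptoticSubspace U W) :
    U.symm x ∈ asymptoticSubspace U W := by
  rw [asymptoticSubspace_eq_lowerLimit_succ]
  exact map_mem_lowerLimit U.symm.continuous (fun n v hv => by simpa [pow_succ] using hv) hx

theorem semiconjBy_pow_left {M : Type*} [Monoid M] {u t : M} {N : ℕ} (h : SemiconjBy u t (t ^ N))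
    (n : ℕ) : SemiconjBy (u ^ n) t (t ^ N ^ n) := by
  induction n with
  | zero => simp
  | succ n ih =>
    rw [pow_succ', pow_succ', pow_mul]
    exact (h.pow_right _).mul_left ih

theorem map_mem_asymptoticSubspace_of_semiconjBy {N : ℕ} (hUT : SemiconjBy U T (T ^ N))
    (hT : ∀ w ∈ W, T w ∈ W) {x : H} (hx : x ∈ asymptoticSubspace U W) :
    T x ∈ asymptoticSubspace U W := by
  have hpow (k : ℕ) : ∀ w ∈ W, (T ^ k) w ∈ W := by
    induction k with
    | zero => simp
    | succ k ih => exact fun w hw => by simpa [pow_succ] using ih _ (hT w hw)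
  refine map_mem_lowerLimit T.continuous (fun n v hv => ?_) hx
  have hcomm : (U ^ n) (T v) = (T ^ N ^ n) ((U ^ n) v) :=
    DFunLike.congr_fun (semiconjBy_pow_left hUT n) v
  simpa [hcomm] using hpow (N ^ n) _ hv

theorem isOrtho_asymptoticSubspace (h : W ⟂ W') :
    asymptoticSubspace U W ⟂ asymptoticSubspace U W' :=
  isOrtho_lowerLimit fun n => Submodule.isOrtho_iff_inner_eq.mpr fun v hv w hw => by
    rw [← (U ^ n).inner_map_map]
    exact Submodule.isOrtho_iff_inner_eq.mp h _ hv _ hw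

theorem asymptoticSubspace_ne_bot_of_summable [CompleteSpace H] {w : ℕ → H} (hw : ∀ n, w n ∈ W)
    (hsum : Summable fun n => ‖w (n + 1) - U (w n)‖) {c : ℝ} (hc : 0 < c)
    (hcw : ∀ n, c ≤ ‖w n‖) : asymptoticSubspace U W ≠ ⊥ := by
  set v : ℕ → H := fun n => (U ^ n).symm (w n)
  have hUv (n : ℕ) : (U ^ n) (v n) = w n := (U ^ n).apply_symm_apply _
  have hdist (n : ℕ) : dist (v n) (v (n + 1)) = ‖w (n + 1) - U (w n)‖ := by
    rw [dist_comm, dist_eq_norm, ← (U ^ (n + 1)).norm_map, map_sub, hUv, pow_succ',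
      LinearIsometryEquiv.coe_mul, comp_apply, hUv]
  obtain ⟨f, hf⟩ := cauchySeq_tendsto_of_complete
    (cauchySeq_of_summable_dist (f := v) (by simpa only [Nat.succ_eq_add_one, hdist] using hsum))
  have hfc : c ≤ ‖f‖ := ge_of_tendsto' hf.norm fun n => by
    rw [← (U ^ n).norm_map, hUv]
    exact hcw n
  refine (Submodule.ne_bot_iff _).mpr
    ⟨f, mem_lowerLimit_of_tendsto (fun n => ?_) hf, norm_pos_iff.mp (hc.trans_le hfc)⟩
  simpa [hUv] using hw n

theorem exists_invariant_subspace_of_isOrtho {N : ℕ} (hUT : SemiconjBy U T (T ^ N))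
    (hT : ∀ w ∈ W, T w ∈ W) (hTsymm : ∀ w ∈ W, T.symm w ∈ W) (hWW' : W ⟂ W')
    (hW : asymptoticSubspace U W ≠ ⊥) (hW' : asymptoticSubspace U W' ≠ ⊥) :
    ∃ K : Submodule 𝕜 H, IsClosed (K : Set H) ∧ K ≠ ⊥ ∧ K ≠ ⊤ ∧
      ∀ f ∈ K, U f ∈ K ∧ U.symm f ∈ K ∧ T f ∈ K ∧ T.symm f ∈ K := by
  have hUT' : SemiconjBy U T⁻¹ (T⁻¹ ^ N) := by simpa using hUT.inv_right
  refine ⟨asymptoticSubspace U W, isClosed_asymptoticSubspace U W, hW, fun htop => hW' ?_,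
    fun f hf => ⟨map_mem_asymptoticSubspace hf, symm_map_mem_asymptoticSubspace hf,
      map_mem_asymptoticSubspace_of_semiconjBy hUT hT hf,
      map_mem_asymptoticSubspace_of_semiconjBy hUT' hTsymm hf⟩⟩
  simpa [htop] using isOrtho_asymptoticSubspace (U := U) hWW'

end AsymptoticSubspace

section Dynamics

variable {X M : Type*}

/-- The multiplicative Birkhoff product `m(x) m(S x) ⋯ m(Sⁿ⁻¹ x)` of `m` along the orbit of `x`. -/
def birkhoffProd [CommMonoid M] (S : X → X) (m : X → M) (n : ℕ) (x : X) : M :=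
  ∏ j ∈ range n, m (S^[j] x)

@[simp]
theorem birkhoffProd_zero [CommMonoid M] (S : X → X) (m : X → M) (x : X) :
    birkhoffProd S m 0 x = 1 :=
  prod_range_zero _

theorem birkhoffProd_succ' [CommMonoid M] (S : X → X) (m : X → M) (n : ℕ) (x : X) :
    birkhoffProd S m (n + 1) x = m x * birkhoffProd S m n (S x) := by
  simp [birkhoffProd, prod_range_succ', mul_comm]

theorem birkhoffProd_add [CommMonoid M] (S : X → X) (m : X → M) (n k : ℕ) (x : X) :
    birkhoffProd S m (n + k) x = birkhoffProd S m n x * birkhoffProd S m k (S^[n] x) := by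
  simp [birkhoffProd, prod_range_add, ← iterate_add_apply, add_comm]

theorem birkhoffProd_pow [CommMonoid M] (S : X → X) (m : X → M) (n k : ℕ) (x : X) :
    birkhoffProd S (fun y => m y ^ k) n x = birkhoffProd S m n x ^ k :=
  prod_pow _ _ _

theorem norm_birkhoffProd [NormedField M] (S : X → X) (m : X → M) (n : ℕ) (x : X) :
    ‖birkhoffProd S m n x‖ = birkhoffProd S (fun y => ‖m y‖) n x :=
  norm_prod _ _

theorem birkhoffProd_nonneg [CommMonoidWithZero M] [PartialOrder M] [PosMulMono M]
    [ZeroLEOneClass M] {m : X → M} (hm : 0 ≤ m) (S : X → X) (n : ℕ) (x : X) :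
    0 ≤ birkhoffProd S m n x :=
  prod_nonneg fun _ _ => hm _

theorem birkhoffProd_comp_of_commute [CommMonoid M] {S σ : X → X} (hσ : Function.Commute σ S)
    (m : X → M) (n : ℕ) (x : X) : birkhoffProd S m n (σ x) = birkhoffProd S (m ∘ σ) n x :=
  prod_congr rfl fun j _ => by rw [comp_apply, (hσ.iterate_right j).eq]

theorem continuous_birkhoffProd [CommMonoid M] [TopologicalSpace X] [TopologicalSpace M]
    [ContinuousMul M] {S : X → X} {m : X → M} (hS : Continuous S) (hm : Continuous m) (n : ℕ) :
    Continuous (birkhoffProd S m n) :=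
  continuous_finsetProd _ fun j _ => hm.comp (hS.iterate j)

theorem measurable_birkhoffProd [CommMonoid M] [MeasurableSpace X] [MeasurableSpace M]
    [MeasurableMul₂ M] {S : X → X} {m : X → M} (hS : Measurable S) (hm : Measurable m) (n : ℕ) :
    Measurable (birkhoffProd S m n) :=
  Finset.measurable_fun_prod _ fun j _ => hm.comp (hS.iterate j)

/-- The points at which the Birkhoff products of `b` take their largest value `1` at time `0`. -/
def peakSet (S : X → X) (b : X → ℝ) : Set X :=
  {x | ∀ n, birkhoffProd S b n x ≤ 1}

theorem measurableSet_peakSet [MeasurableSpace X] {S : X → X} {b : X → ℝ} (hS : Measurable S)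
    (hb : Measurable b) : MeasurableSet (peakSet S b) := by
  rw [peakSet, Set.ofPred_forall]
  exact .iInter fun n => measurableSet_le (measurable_birkhoffProd hS hb n) measurable_const

-- The orbit is in the peak set at the time at which the Birkhoff product is largest.
theorem exists_iterate_mem_peakSet {S : X → X} {b : X → ℝ} {x : X}
    (hx : Tendsto (fun n => birkhoffProd S b n x) atTop (𝓝 0)) : ∃ n, S^[n] x ∈ peakSet S b := by
  obtain ⟨N, hN⟩ := eventually_atTop.mp (hx.eventually_lt_const one_pos)
  obtain ⟨n, -, hn⟩ := exists_max_image (range (N + 1)) (fun k => birkhoffProd S b k x) ⟨0, by simp⟩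
  have hone : 1 ≤ birkhoffProd S b n x := by simpa using hn 0 (by simp)
  have hmax (k : ℕ) : birkhoffProd S b k x ≤ birkhoffProd S b n x := by
    rcases lt_or_ge k N with hk | hk
    · exact hn k (mem_range.mpr (by lia))
    · exact (hN k hk).le.trans hone
  refine ⟨n, fun k => le_of_mul_le_mul_left ?_ (one_pos.trans_le hone)⟩
  simpa [← birkhoffProd_add] using hmax (n + k)

/-- The points whose orbit under `S` visits `E`, and lies in `Q` at the first visit. -/
def firstEntrySet (S : X → X) (E Q : Set X) : Set X :=
  {x | ∃ n, S^[n] x ∈ E ∧ (∀ j < n, S^[j] x ∉ E) ∧ S^[n] x ∈ Q}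

theorem measurableSet_firstEntrySet [MeasurableSpace X] {S : X → X} {E Q : Set X}
    (hS : Measurable S) (hE : MeasurableSet E) (hQ : MeasurableSet Q) :
    MeasurableSet (firstEntrySet S E Q) := by
  simp only [firstEntrySet, Set.ofPred_exists, Set.ofPred_and, Set.ofPred_forall]
  exact .iUnion fun n => (hS.iterate n hE).inter <|
    (MeasurableSet.iInter fun j => .iInter fun _ => (hS.iterate j hE).compl).inter
      (hS.iterate n hQ)

theorem apply_mem_firstEntrySet_iff {S : X → X} {E Q : Set X} {x : X} (hx : x ∉ E) :
    S x ∈ firstEntrySet S E Q ↔ x ∈ firstEntrySet S E Q := by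
  constructor
  · rintro ⟨n, hE, hfirst, hQ⟩
    refine ⟨n + 1, hE, fun j hj => ?_, hQ⟩
    cases j with
    | zero => exact hx
    | succ j => exact hfirst j (by lia)
  · rintro ⟨_ | n, hE, hfirst, hQ⟩
    · exact absurd hE hx
    · exact ⟨n, hE, fun j hj => hfirst (j + 1) (by lia), hQ⟩

theorem mem_firstEntrySet_iff_of_first {S : X → X} {E Q : Set X} {x : X} {n : ℕ}
    (hE : S^[n] x ∈ E) (hfirst : ∀ j < n, S^[j] x ∉ E) :
    x ∈ firstEntrySet S E Q ↔ S^[n] x ∈ Q := by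
  refine ⟨?_, fun hQ => ⟨n, hE, hfirst, hQ⟩⟩
  rintro ⟨k, hkE, hkfirst, hkQ⟩
  rcases lt_trichotomy k n with hkn | rfl | hkn
  · exact absurd hkE (hfirst k hkn)
  · exact hkQ
  · exact absurd hE (hkfirst n hkn)

theorem map_mem_firstEntrySet_iff_notMem {S σ : X → X} {E Q : Set X} (hσS : Function.Commute σ S)
    (hσE : ∀ x, σ x ∈ E ↔ x ∈ E) {x : X} (hx : ∃ n, S^[n] x ∈ E)
    (hσQ : ∀ n, σ (S^[n] x) ∈ Q ↔ S^[n] x ∉ Q) :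
    σ x ∈ firstEntrySet S E Q ↔ x ∉ firstEntrySet S E Q := by
  classical
  have hiter (n : ℕ) : S^[n] (σ x) = σ (S^[n] x) := ((hσS.iterate_right n).eq x).symm
  have hfirst (j : ℕ) (hj : j < Nat.find hx) : S^[j] x ∉ E := Nat.find_min hx hj
  rw [mem_firstEntrySet_iff_of_first (Nat.find_spec hx) hfirst,
    mem_firstEntrySet_iff_of_first (n := Nat.find hx), hiter, hσQ]
  · simpa only [hiter, hσE] using Nat.find_spec hx
  · simpa only [hiter, hσE] using hfirst

end Dynamics

section Integration

variable {X : Type*} [MeasurableSpace X] {μ : Measure X}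

theorem ae_tendsto_zero_of_summable_integral_norm {E : Type*} [NormedAddCommGroup E]
    {f : ℕ → X → E} (hf : ∀ n, Integrable (f n) μ) (hsum : Summable fun n => ∫ x, ‖f n x‖ ∂μ) :
    ∀ᵐ x ∂μ, Tendsto (fun n => f n x) atTop (𝓝 0) := by
  have hlint : ∫⁻ x, ∑' n, ‖f n x‖ₑ ∂μ ≠ ⊤ := by
    rw [lintegral_tsum fun n => (hf n).aestronglyMeasurable.enorm]
    simp_rw [← ofReal_integral_norm_eq_lintegral_enorm (hf _)]
    exact hsum.tsum_ofReal_ne_top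
  have hmeas : AEMeasurable (fun x => ∑' n, ‖f n x‖ₑ) μ :=
    AEMeasurable.tsum fun n => (hf n).aestronglyMeasurable.enorm
  filter_upwards [ae_lt_top' hmeas hlint] with x hx
  exact tendsto_zero_iff_enorm_tendsto_zero.mpr (ENNReal.tendsto_atTop_zero_of_tsum_ne_top hx.ne)

theorem ae_tendsto_birkhoffProd_zero {𝕜 : Type*} [NormedField 𝕜] {S : X → X} {m : X → 𝕜} {r : ℝ}
    (hm : ∀ n, Integrable (birkhoffProd S m n) μ) (hr0 : 0 ≤ r) (hr1 : r < 1)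
    (hint : ∀ n, ∫ x, ‖birkhoffProd S m n x‖ ∂μ ≤ r ^ n) :
    ∀ᵐ x ∂μ, Tendsto (fun n => birkhoffProd S m n x) atTop (𝓝 0) :=
  ae_tendsto_zero_of_summable_integral_norm hm
    ((summable_geometric_of_lt_one hr0 hr1).of_nonneg_of_le
      (fun _ => integral_nonneg fun _ => norm_nonneg _) hint)

theorem ae_map_mem_firstEntrySet_peakSet_iff {S σ : X → X} {b : X → ℝ} {Q : Set X}
    (hσS : Function.Commute σ S) (hS : Measure.QuasiMeasurePreserving S μ μ)
    (hb : ∀ x, b (σ x) = b x) (hQ : ∀ᵐ x ∂μ, σ x ∈ Q ↔ x ∉ Q)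
    (hlim : ∀ᵐ x ∂μ, Tendsto (fun n => birkhoffProd S b n x) atTop (𝓝 0)) :
    ∀ᵐ x ∂μ,
      σ x ∈ firstEntrySet S (peakSet S b) Q ↔ x ∉ firstEntrySet S (peakSet S b) Q := by
  have hpeak (x : X) : σ x ∈ peakSet S b ↔ x ∈ peakSet S b :=
    forall_congr' fun n => by rw [birkhoffProd_comp_of_commute hσS, funext hb (f := b ∘ σ)]
  filter_upwards [hlim, ae_all_iff.mpr fun n => (hS.iterate n).ae hQ] with x hx hxQ
  exact map_mem_firstEntrySet_iff_notMem hσS hpeak (exists_iterate_mem_peakSet hx) hxQ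

theorem setIntegral_compl_eq_of_ae_swap {E : Type*} [NormedAddCommGroup E] [NormedSpace ℝ E]
    {σ : X ≃ᵐ X} (hσ : MeasurePreserving σ μ μ)
    {P : Set X} (hP : ∀ᵐ x ∂μ, σ x ∈ P ↔ x ∉ P) {g : X → E} (hg : ∀ x, g (σ x) = g x) :
    ∫ x in Pᶜ, g x ∂μ = ∫ x in P, g x ∂μ := by
  have hpre : (σ ⁻¹' P : Set X) =ᵐ[μ] (Pᶜ : Set X) := hP.mono fun x hx => propext hx
  rw [← setIntegral_congr_set hpre, ← hσ.setIntegral_preimage_emb σ.measurableEmbedding g P]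
  simp only [hg]

theorem setIntegral_eq_half_of_ae_swap {E : Type*} [NormedAddCommGroup E] [NormedSpace ℝ E]
    {σ : X ≃ᵐ X} (hσ : MeasurePreserving σ μ μ) {P : Set X} (hP : MeasurableSet P)
    (hswap : ∀ᵐ x ∂μ, σ x ∈ P ↔ x ∉ P) {g : X → E} (hg : Integrable g μ)
    (hgσ : ∀ x, g (σ x) = g x) : ∫ x in P, g x ∂μ = (2⁻¹ : ℝ) • ∫ x, g x ∂μ := by
  rw [← integral_add_compl hP hg, setIntegral_compl_eq_of_ae_swap hσ hswap hgσ, ← two_smul ℝ,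
    inv_smul_smul₀ two_ne_zero]

end Integration

section WeightedComposition

variable {X 𝕜 : Type*} [RCLike 𝕜] [MeasurableSpace X] {μ : Measure X}

theorem L2_norm_sq_eq_integral {E : Type*} [NormedAddCommGroup E] [InnerProductSpace 𝕜 E]
    (F : Lp E 2 μ) : ‖F‖ ^ 2 = ∫ x, ‖F x‖ ^ 2 ∂μ := by
  rw [norm_sq_eq_re_inner (𝕜 := 𝕜) F, L2.inner_def, ← integral_re (L2.integrable_inner F F)]
  simp only [norm_sq_eq_re_inner (𝕜 := 𝕜)]

section SupportedOn

variable {E : Type*} [NormedAddCommGroup E]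

/-- The elements of `Lᵖ` that vanish almost everywhere outside `P`. -/
def supportedOn (𝕜 E : Type*) [RCLike 𝕜] [NormedAddCommGroup E] [NormedSpace 𝕜 E] (p : ℝ≥0∞)
    [Fact (1 ≤ p)] (μ : Measure X) (P : Set X) : Submodule 𝕜 (Lp E p μ) :=
  (LpToLpRestrictCLM X E 𝕜 μ p Pᶜ).ker

theorem mem_supportedOn_iff [NormedSpace 𝕜 E] {p : ℝ≥0∞} [Fact (1 ≤ p)] {P : Set X}
    (hP : MeasurableSet P) {F : Lp E p μ} :
    F ∈ supportedOn 𝕜 E p μ P ↔ ∀ᵐ x ∂μ, x ∉ P → F x = 0 := by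
  rw [supportedOn, LinearMap.mem_ker, ContinuousLinearMap.coe_coe, Lp.eq_zero_iff_ae_eq_zero]
  have hF := LpToLpRestrictCLM_coeFn 𝕜 Pᶜ F
  simp only [← Set.mem_compl_iff, ← ae_restrict_iff' hP.compl]
  exact ⟨hF.symm.trans, hF.trans⟩

theorem isOrtho_supportedOn_compl [InnerProductSpace 𝕜 E] {P : Set X} (hP : MeasurableSet P) :
    supportedOn 𝕜 E 2 μ P ⟂ supportedOn 𝕜 E 2 μ Pᶜ := by
  refine Submodule.isOrtho_iff_inner_eq.mpr fun F hF G hG => integral_eq_zero_of_ae ?_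
  filter_upwards [(mem_supportedOn_iff hP).mp hF, (mem_supportedOn_iff hP.compl).mp hG]
    with x hFx hGx
  by_cases hx : x ∈ P
  · simp [hGx (not_not.mpr hx)]
  · simp [hFx hx]

end SupportedOn

theorem memLp_of_continuous [TopologicalSpace X] [OpensMeasurableSpace X] [CompactSpace X]
    [IsFiniteMeasure μ] {E : Type*} [NormedAddCommGroup E] {f : X → E} (hf : Continuous f)
    (p : ℝ≥0∞) : MemLp f p μ :=
  hf.memLp_of_hasCompactSupport (.of_compactSpace f)

theorem integrable_of_continuous [TopologicalSpace X] [OpensMeasurableSpace X] [CompactSpace X]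
    [IsFiniteMeasure μ] {E : Type*} [NormedAddCommGroup E] {f : X → E} (hf : Continuous f) :
    Integrable f μ :=
  hf.integrable_of_hasCompactSupport (.of_compactSpace f)

section WeightedComp

variable [TopologicalSpace X] [BorelSpace X] [CompactSpace X] [IsFiniteMeasure μ]
  {S : X → X} {p : ℝ≥0∞} [Fact (1 ≤ p)]

/-- The weighted composition operator `F ↦ m · (F ∘ S)` on `Lᵖ`. -/
def weightedComp (p : ℝ≥0∞) [Fact (1 ≤ p)] (m : C(X, 𝕜)) (hS : MeasurePreserving S μ μ) :
    Lp 𝕜 p μ →L[𝕜] Lp 𝕜 p μ :=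
  ((ContinuousLinearMap.mul 𝕜 𝕜).holderL μ ∞ p p (ContinuousMap.toLp ∞ μ 𝕜 m)).comp
    (Lp.compMeasurePreservingₗᵢ 𝕜 S hS).toContinuousLinearMap

theorem coeFn_weightedComp (m : C(X, 𝕜)) (hS : MeasurePreserving S μ μ) (F : Lp 𝕜 p μ) :
    weightedComp p m hS F =ᵐ[μ] fun x => m x * F (S x) := by
  have hmul := (ContinuousLinearMap.mul 𝕜 𝕜).coeFn_holder (r := p) (ContinuousMap.toLp ∞ μ 𝕜 m)
    (Lp.compMeasurePreserving S hS F)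
  filter_upwards [hmul, ContinuousMap.coeFn_toLp μ (p := ∞) (𝕜 := 𝕜) m,
    Lp.coeFn_compMeasurePreserving F hS] with x hx hm hF
  rw [hm, hF] at hx
  exact hx

theorem weightedComp_toLp (hSc : Continuous S) (m : C(X, 𝕜)) (hS : MeasurePreserving S μ μ)
    (f : C(X, 𝕜)) :
    weightedComp p m hS (ContinuousMap.toLp p μ 𝕜 f) =
      ContinuousMap.toLp p μ 𝕜 (m * f.comp ⟨S, hSc⟩) := by
  refine Lp.ext ?_
  filter_upwards [coeFn_weightedComp m hS (ContinuousMap.toLp p μ 𝕜 f),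
    hS.quasiMeasurePreserving.ae_eq_comp (ContinuousMap.coeFn_toLp μ (p := p) (𝕜 := 𝕜) f),
    ContinuousMap.coeFn_toLp μ (p := p) (𝕜 := 𝕜) (m * f.comp ⟨S, hSc⟩)] with x hw hf hm
  rw [comp_apply, comp_apply] at hf
  rw [hw, hf, hm]
  rfl

theorem weightedComp_mem_supportedOn {P : Set X} (hP : MeasurableSet P) (m : C(X, 𝕜))
    {F : Lp 𝕜 p μ} (hF : F ∈ supportedOn 𝕜 𝕜 p μ P) :
    weightedComp p m (.id μ) F ∈ supportedOn 𝕜 𝕜 p μ P := by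
  rw [mem_supportedOn_iff hP] at hF ⊢
  filter_upwards [hF, coeFn_weightedComp m (.id μ) F] with x hFx hx hxP
  rw [hx, id, hFx hxP, mul_zero]

/-- The Birkhoff product of `m` cut off outside `P`, as an element of `L²`. -/
def cutoffProd (μ : Measure X) [IsFiniteMeasure μ] (hS : Continuous S) (m : C(X, 𝕜)) {P : Set X}
    (hP : MeasurableSet P) (n : ℕ) : Lp 𝕜 2 μ :=
  ((memLp_of_continuous (continuous_birkhoffProd hS m.continuous n) 2).indicator hP).toLp _

theorem coeFn_cutoffProd (hS : Continuous S) (m : C(X, 𝕜)) {P : Set X} (hP : MeasurableSet P)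
    (n : ℕ) : cutoffProd μ hS m hP n =ᵐ[μ] P.indicator (birkhoffProd S m n) :=
  MemLp.coeFn_toLp _

theorem cutoffProd_mem_supportedOn (hS : Continuous S) (m : C(X, 𝕜)) {P : Set X}
    (hP : MeasurableSet P) (n : ℕ) : cutoffProd μ hS m hP n ∈ supportedOn 𝕜 𝕜 2 μ P := by
  rw [mem_supportedOn_iff hP]
  filter_upwards [coeFn_cutoffProd hS m hP n] with x hx hxP
  rw [hx, Set.indicator_of_notMem hxP]

theorem norm_sq_cutoffProd (hS : Continuous S) (m : C(X, 𝕜)) {P : Set X} (hP : MeasurableSet P)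
    (n : ℕ) : ‖cutoffProd μ hS m hP n‖ ^ 2 = ∫ x in P, ‖birkhoffProd S m n x‖ ^ 2 ∂μ := by
  rw [L2_norm_sq_eq_integral (𝕜 := 𝕜), ← integral_indicator hP]
  refine integral_congr_ae ?_
  filter_upwards [coeFn_cutoffProd hS m hP n] with x hx
  by_cases hxP : x ∈ P <;> simp [hx, hxP]

theorem norm_cutoffProd_sub_weightedComp_le (hS : MeasurePreserving S μ μ) (hSc : Continuous S)
    (m : C(X, 𝕜)) {P : Set X} (hP : MeasurableSet P)
    (hinv : ∀ x ∉ peakSet S (fun y => ‖m y‖), S x ∈ P ↔ x ∈ P) (n : ℕ) :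
    ‖cutoffProd μ hSc m hP (n + 1) - weightedComp 2 m hS (cutoffProd μ hSc m hP n)‖ ^ 2 ≤
      ∫ x, ‖birkhoffProd S m (n + 1) x‖ ∂μ := by
  rw [L2_norm_sq_eq_integral (𝕜 := 𝕜)]
  have hint : Integrable (fun x => ‖birkhoffProd S m (n + 1) x‖) μ :=
    integrable_of_continuous (continuous_birkhoffProd hSc m.continuous (n + 1)).norm
  refine integral_mono_of_nonneg (.of_forall fun x => by positivity) hint ?_
  filter_upwards [Lp.coeFn_sub (cutoffProd μ hSc m hP (n + 1)) _,
    coeFn_cutoffProd hSc m hP (n + 1), coeFn_weightedComp m hS (cutoffProd μ hSc m hP n),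
    hS.quasiMeasurePreserving.ae (coeFn_cutoffProd hSc m hP n)] with x hsub hsucc hcomp hn
  have hshift : m x * P.indicator (birkhoffProd S m n) (S x) =
      (S ⁻¹' P).indicator (birkhoffProd S m (n + 1)) x := by
    by_cases hx : S x ∈ P
    · rw [Set.indicator_of_mem hx, Set.indicator_of_mem (Set.mem_preimage.mpr hx),
        birkhoffProd_succ']
    · rw [Set.indicator_of_notMem hx, Set.indicator_of_notMem (mt Set.mem_preimage.mp hx), mul_zero]
  rw [hsub, Pi.sub_apply, hsucc, hcomp, hn, hshift]
  by_cases hx : x ∈ peakSet S (fun y => ‖m y‖)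
  · have hle : ‖birkhoffProd S m (n + 1) x‖ ≤ 1 := (norm_birkhoffProd S m _ x).trans_le (hx _)
    have hsq := pow_le_of_le_one (norm_nonneg _) hle two_ne_zero
    by_cases hxP : x ∈ P <;> by_cases hSx : S x ∈ P <;> simp [hxP, hSx, hsq]
  · by_cases hxP : x ∈ P <;> simp [hxP, hinv x hx]

end WeightedComp

end WeightedComposition

section IntertwiningIsometry

variable {X 𝕜 H : Type*} [RCLike 𝕜] [MeasurableSpace X] [TopologicalSpace X] [BorelSpace X]
  [CompactSpace X] {μ : Measure X} [IsFiniteMeasure μ]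
  {S : X → X} {m e e' : C(X, 𝕜)} [NormedAddCommGroup H] [InnerProductSpace 𝕜 H] [CompleteSpace H]
  {U T : H ≃ₗᵢ[𝕜] H} {J : Lp 𝕜 2 μ →ₗᵢ[𝕜] H} {P : Set X}

theorem asymptoticSubspace_map_supportedOn_ne_bot (hS : MeasurePreserving S μ μ)
    (hSc : Continuous S) (hU : ∀ F, U (J F) = J (weightedComp 2 m hS F)) (hP : MeasurableSet P)
    (hinv : ∀ x ∉ peakSet S (fun y => ‖m y‖), S x ∈ P ↔ x ∈ P) {r : ℝ} (hr0 : 0 ≤ r) (hr1 : r < 1)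
    (hint : ∀ n, ∫ x, ‖birkhoffProd S m n x‖ ∂μ ≤ r ^ n) {c : ℝ} (hc : 0 < c)
    (hcP : ∀ n, c ≤ ∫ x in P, ‖birkhoffProd S m n x‖ ^ 2 ∂μ) :
    asymptoticSubspace U ((supportedOn 𝕜 𝕜 2 μ P).map J.toLinearMap) ≠ ⊥ := by
  refine asymptoticSubspace_ne_bot_of_summable (w := fun n => J (cutoffProd μ hSc m hP n))
    (fun n => Submodule.mem_map_of_mem (cutoffProd_mem_supportedOn hSc m hP n)) ?_
    (Real.sqrt_pos.mpr hc) fun n => ?_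
  · have hgeom : Summable fun n => √r ^ (n + 1) :=
      (summable_nat_add_iff 1).mpr
        (summable_geometric_of_lt_one (Real.sqrt_nonneg r) ((Real.sqrt_lt' one_pos).mpr (by simpa)))
    refine hgeom.of_nonneg_of_le (fun n => norm_nonneg _) fun n => ?_
    rw [hU, ← map_sub, J.norm_map]
    refine le_of_sq_le_sq ?_ (by positivity)
    rw [← pow_mul, mul_comm (n + 1), pow_mul, Real.sq_sqrt hr0]
    exact (norm_cutoffProd_sub_weightedComp_le hS hSc m hP hinv n).trans (hint (n + 1))
  · rw [J.norm_map]
    refine Real.sqrt_le_iff.mpr ⟨norm_nonneg _, ?_⟩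
    exact (hcP n).trans_eq (norm_sq_cutoffProd hSc m hP n).symm

theorem exists_invariant_subspace_of_intertwining {N : ℕ} (hUT : SemiconjBy U T (T ^ N))
    (hS : MeasurePreserving S μ μ) (hSc : Continuous S)
    (hU : ∀ F, U (J F) = J (weightedComp 2 m hS F))
    (hT : ∀ F, T (J F) = J (weightedComp 2 e (.id μ) F))
    (hTsymm : ∀ F, T.symm (J F) = J (weightedComp 2 e' (.id μ) F)) (hP : MeasurableSet P)
    (hinv : ∀ x ∉ peakSet S (fun y => ‖m y‖), S x ∈ P ↔ x ∈ P) {r : ℝ} (hr0 : 0 ≤ r) (hr1 : r < 1)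
    (hint : ∀ n, ∫ x, ‖birkhoffProd S m n x‖ ∂μ ≤ r ^ n) {c : ℝ} (hc : 0 < c)
    (hcP : ∀ n, c ≤ ∫ x in P, ‖birkhoffProd S m n x‖ ^ 2 ∂μ)
    (hcPc : ∀ n, c ≤ ∫ x in Pᶜ, ‖birkhoffProd S m n x‖ ^ 2 ∂μ) :
    ∃ K : Submodule 𝕜 H, IsClosed (K : Set H) ∧ K ≠ ⊥ ∧ K ≠ ⊤ ∧
      ∀ f ∈ K, U f ∈ K ∧ U.symm f ∈ K ∧ T f ∈ K ∧ T.symm f ∈ K := by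
  refine exists_invariant_subspace_of_isOrtho hUT ?_ ?_
    ((isOrtho_supportedOn_compl hP).map J)
    (asymptoticSubspace_map_supportedOn_ne_bot hS hSc hU hP hinv hr0 hr1 hint hc hcP)
    (asymptoticSubspace_map_supportedOn_ne_bot hS hSc hU hP.compl
      (fun x hx => not_congr (hinv x hx)) hr0 hr1 hint hc hcPc)
  · rintro _ ⟨F, hF, rfl⟩
    exact ⟨_, weightedComp_mem_supportedOn hP e hF, (hT F).symm⟩
  · rintro _ ⟨F, hF, rfl⟩
    exact ⟨_, weightedComp_mem_supportedOn hP e' hF, (hTsymm F).symm⟩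

theorem exists_invariant_subspace_of_swap {N : ℕ} (hUT : SemiconjBy U T (T ^ N))
    (hS : MeasurePreserving S μ μ) (hSc : Continuous S)
    (hU : ∀ F, U (J F) = J (weightedComp 2 m hS F))
    (hT : ∀ F, T (J F) = J (weightedComp 2 e (.id μ) F))
    (hTsymm : ∀ F, T.symm (J F) = J (weightedComp 2 e' (.id μ) F))
    {σ : X ≃ᵐ X} (hσ : MeasurePreserving σ μ μ) (hσS : Function.Commute σ S)
    (hm : ∀ x, ‖m (σ x)‖ = ‖m x‖) {Q : Set X} (hQ : MeasurableSet Q)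
    (hσQ : ∀ᵐ x ∂μ, σ x ∈ Q ↔ x ∉ Q) {r : ℝ} (hr0 : 0 ≤ r) (hr1 : r < 1)
    (hint : ∀ n, ∫ x, ‖birkhoffProd S m n x‖ ∂μ ≤ r ^ n) {c : ℝ} (hc : 0 < c)
    (hint_sq : ∀ n, c ≤ ∫ x, ‖birkhoffProd S m n x‖ ^ 2 ∂μ) :
    ∃ K : Submodule 𝕜 H, IsClosed (K : Set H) ∧ K ≠ ⊥ ∧ K ≠ ⊤ ∧
      ∀ f ∈ K, U f ∈ K ∧ U.symm f ∈ K ∧ T f ∈ K ∧ T.symm f ∈ K := by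
  set b : X → ℝ := fun x => ‖m x‖
  set P := firstEntrySet S (peakSet S b) Q
  have hcont (n : ℕ) := continuous_birkhoffProd hSc m.continuous n
  have hP : MeasurableSet P := measurableSet_firstEntrySet hS.measurable
    (measurableSet_peakSet hS.measurable m.continuous.norm.measurable) hQ
  have hlim := ae_tendsto_birkhoffProd_zero (fun n => integrable_of_continuous (hcont n))
    hr0 hr1 hint
  have hswap : ∀ᵐ x ∂μ, σ x ∈ P ↔ x ∉ P :=
    ae_map_mem_firstEntrySet_peakSet_iff hσS hS.quasiMeasurePreserving hm hσQ
      (hlim.mono fun x hx => by simpa only [norm_birkhoffProd, norm_zero] using hx.norm)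
  have hinvariant (n : ℕ) (x : X) :
      ‖birkhoffProd S m n (σ x)‖ ^ 2 = ‖birkhoffProd S m n x‖ ^ 2 := by
    rw [norm_birkhoffProd, norm_birkhoffProd, birkhoffProd_comp_of_commute hσS,
      show b ∘ σ = b from funext hm]
  have hhalf (n : ℕ) : 2⁻¹ * c ≤ ∫ x in P, ‖birkhoffProd S m n x‖ ^ 2 ∂μ := by
    have hsq : Integrable (fun x => ‖birkhoffProd S m n x‖ ^ 2) μ :=
      integrable_of_continuous ((hcont n).norm.pow 2)
    rw [setIntegral_eq_half_of_ae_swap hσ hP hswap hsq (hinvariant n), smul_eq_mul]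
    exact mul_le_mul_of_nonneg_left (hint_sq n) (by norm_num)
  refine exists_invariant_subspace_of_intertwining hUT hS hSc hU hT hTsymm hP
    (fun x hx => apply_mem_firstEntrySet_iff hx) hr0 hr1 hint (by positivity) hhalf fun n => ?_
  rw [setIntegral_compl_eq_of_ae_swap hσ hswap (hinvariant n)]
  exact hhalf n

end IntertwiningIsometry

section RieszProduct

variable {G : Type*} [AddCommGroup G] [TopologicalSpace G] [IsTopologicalAddGroup G]
  [MeasurableSpace G] [BorelSpace G] {μ : Measure G} {N : ℕ} {t : G} {b : G → ℝ}

theorem integral_birkhoffProd_comp_nsmul (hN : MeasurePreserving (N • · : G → G) μ μ)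
    (hb : Continuous b) (n : ℕ) :
    ∫ x, birkhoffProd (N • ·) b n (N • x) ∂μ = ∫ x, birkhoffProd (N • ·) b n x ∂μ := by
  conv_rhs => rw [← hN.map_eq]
  exact (integral_map hN.aemeasurable
    (continuous_birkhoffProd (continuous_nsmul N) hb n).aestronglyMeasurable).symm

variable [CompactSpace G] [μ.IsAddRightInvariant]

theorem integral_sum_translate_mul [IsFiniteMeasure μ] {g : G → ℝ} (hb : Continuous b)
    (hg : Continuous g) (hgt : ∀ x, g (x + t) = g x) (N : ℕ) :
    ∫ x, (∑ j ∈ range N, b (x + j • t)) * g x ∂μ = N * ∫ x, b x * g x ∂μ := by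
  have hgj (j : ℕ) (x : G) : g (x + j • t) = g x := by
    induction j with
    | zero => simp
    | succ j ih => rw [succ_nsmul, ← add_assoc, hgt, ih]
  have hterm (j : ℕ) : ∫ x, b (x + j • t) * g x ∂μ = ∫ x, b x * g x ∂μ := by
    simpa only [hgj] using integral_add_right_eq_self (μ := μ) (fun x => b x * g x) (j • t)
  simp_rw [sum_mul]
  rw [integral_finsetSum _ fun j _ => integrable_of_continuous (by fun_prop)]
  simp [hterm]

theorem natCast_mul_integral_birkhoffProd_succ [IsFiniteMeasure μ] (ht : N • t = 0)
    (hb : Continuous b) (n : ℕ) :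
    N * ∫ x, birkhoffProd (N • ·) b (n + 1) x ∂μ =
      ∫ x, (∑ j ∈ range N, b (x + j • t)) * birkhoffProd (N • ·) b n (N • x) ∂μ := by
  simp_rw [birkhoffProd_succ']
  refine (integral_sum_translate_mul hb ?_ (fun x => ?_) N).symm
  · exact (continuous_birkhoffProd (continuous_nsmul N) hb n).comp (continuous_nsmul N)
  · rw [nsmul_add, ht, add_zero]

variable [IsProbabilityMeasure μ]

theorem integral_birkhoffProd_eq_one (hN : MeasurePreserving (N • · : G → G) μ μ) (hN0 : N ≠ 0)
    (ht : N • t = 0) (hb : Continuous b) (hsum : ∀ x, ∑ j ∈ range N, b (x + j • t) = N) (n : ℕ) :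
    ∫ x, birkhoffProd (N • ·) b n x ∂μ = 1 := by
  induction n with
  | zero => simp
  | succ n ih =>
    refine mul_left_cancel₀ (Nat.cast_ne_zero.mpr hN0 : (N : ℝ) ≠ 0) ?_
    rw [natCast_mul_integral_birkhoffProd_succ ht hb]
    simp_rw [hsum]
    rw [integral_const_mul, integral_birkhoffProd_comp_nsmul hN hb, ih]

theorem integral_birkhoffProd_le_pow (hN : MeasurePreserving (N • · : G → G) μ μ) (hN0 : N ≠ 0)
    (ht : N • t = 0) (hb : Continuous b) (hb0 : 0 ≤ b) {ρ : ℝ}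
    (hsum : ∀ x, ∑ j ∈ range N, b (x + j • t) ≤ N * ρ) (n : ℕ) :
    ∫ x, birkhoffProd (N • ·) b n x ∂μ ≤ ρ ^ n := by
  have hNpos : (0 : ℝ) < N := Nat.cast_pos.mpr (Nat.pos_of_ne_zero hN0)
  have hNρ : 0 ≤ N * ρ := (sum_nonneg fun j _ => hb0 (0 + j • t)).trans (hsum 0)
  induction n with
  | zero => simp
  | succ n ih =>
    have hcont : Continuous fun x : G => birkhoffProd (N • ·) b n (N • x) :=
      (continuous_birkhoffProd (continuous_nsmul N) hb n).comp (continuous_nsmul N)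
    refine le_of_mul_le_mul_left ?_ hNpos
    calc N * ∫ x, birkhoffProd (N • ·) b (n + 1) x ∂μ
        = ∫ x, (∑ j ∈ range N, b (x + j • t)) * birkhoffProd (N • ·) b n (N • x) ∂μ :=
          natCast_mul_integral_birkhoffProd_succ ht hb n
      _ ≤ ∫ x, N * ρ * birkhoffProd (N • ·) b n (N • x) ∂μ :=
          integral_mono (integrable_of_continuous (by fun_prop))
            (integrable_of_continuous (by fun_prop)) fun x =>
              mul_le_mul_of_nonneg_right (hsum x) (birkhoffProd_nonneg hb0 _ n _)
      _ = N * ρ * ∫ x, birkhoffProd (N • ·) b n x ∂μ := by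
          rw [integral_const_mul, integral_birkhoffProd_comp_nsmul hN hb]
      _ ≤ N * ρ * ρ ^ n := mul_le_mul_of_nonneg_left ih hNρ
      _ = N * ρ ^ (n + 1) := by ring

end RieszProduct

section HilbertBasis

variable {ι 𝕜 E H : Type*} [RCLike 𝕜] [NormedAddCommGroup E] [InnerProductSpace 𝕜 E]
  [NormedAddCommGroup H] [InnerProductSpace 𝕜 H]

theorem eq_of_eq_on_hilbertBasis (b : HilbertBasis ι 𝕜 E) {A B : E →L[𝕜] H}
    (h : ∀ i, A (b i) = B (b i)) : A = B :=
  ContinuousLinearMap.ext_on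
    ((Submodule.dense_iff_topologicalClosure_eq_top).mpr b.dense_span) (Set.forall_mem_range.mpr h)

theorem exists_linearIsometry_apply_hilbertBasis [CompleteSpace H] (b : HilbertBasis ι 𝕜 E)
    {v : ι → H} (hv : Orthonormal 𝕜 v) : ∃ J : E →ₗᵢ[𝕜] H, ∀ i, J (b i) = v i := by
  classical
  refine ⟨hv.orthogonalFamily.linearIsometry.comp b.repr.toLinearIsometry, fun i => ?_⟩
  simp [b.repr_self, hv.orthogonalFamily.linearIsometry_apply_single]

theorem orthonormal_zpow_apply {T : H ≃ₗᵢ[𝕜] H} {φ : H} (hφ : ‖φ‖ = 1)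
    (horth : ∀ k : ℕ, k ≠ 0 → ⟪φ, (T ^ k) φ⟫_𝕜 = 0) : Orthonormal 𝕜 fun k : ℤ => (T ^ k) φ := by
  have hlt {i j : ℤ} (hij : i < j) : ⟪(T ^ i) φ, (T ^ j) φ⟫_𝕜 = 0 := by
    obtain ⟨k, rfl⟩ := Int.le.dest hij.le
    rw [zpow_add, zpow_natCast, LinearIsometryEquiv.coe_mul, comp_apply,
      LinearIsometryEquiv.inner_map_map]
    exact horth k (by lia)
  refine ⟨fun k => by rw [LinearIsometryEquiv.norm_map, hφ], fun i j hij => ?_⟩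
  rcases hij.lt_or_gt with h | h
  · exact hlt h
  · exact inner_eq_zero_symm.mp (hlt h)

end HilbertBasis

section Circle

variable {p : ℝ}

theorem norm_fourier_apply (k : ℤ) (x : AddCircle p) : ‖fourier k x‖ = 1 := by
  rw [fourier_apply, Circle.norm_coe]

theorem fourier_apply_neg (k : ℤ) (x : AddCircle p) : fourier k (-x) = star (fourier k x) := by
  rw [fourier_apply, smul_neg, fourier_neg', starRingEnd_apply]

/-- The open upper half of the circle `ℝ / pℤ`, of which `x ↦ -x` is the complementary half. -/
def upperHalfCircle (p : ℝ) : Set (AddCircle p) :=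
  {x | 0 < (fourier 1 x).im}

theorem isOpen_upperHalfCircle : IsOpen (upperHalfCircle p) :=
  isOpen_lt continuous_const (Complex.continuous_im.comp (fourier 1).continuous)

variable [Fact (0 < p)]

theorem neg_mem_upperHalfCircle_iff {x : AddCircle p} (hx : 2 • x ≠ 0) :
    -x ∈ upperHalfCircle p ↔ x ∉ upperHalfCircle p := by
  have him : (fourier 1 x).im ≠ 0 := by
    refine fun him => hx ?_
    have hreal : fourier 1 (-x) = fourier 1 x := by
      rw [fourier_apply_neg]
      exact Complex.conj_eq_iff_im.mpr him
    rw [fourier_one, fourier_one, Circle.coe_inj] at hreal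
    rw [two_nsmul, ← neg_eq_iff_add_eq_zero]
    exact AddCircle.injective_toCircle (Fact.out : 0 < p).ne' hreal
  have hneg : (fourier 1 (-x)).im = -(fourier 1 x).im := by rw [fourier_apply_neg]; rfl
  rw [upperHalfCircle, Set.mem_ofPred_eq, Set.mem_ofPred_eq, hneg, neg_pos, not_lt, him.le_iff_lt]

instance nontrivial_addCircle : Nontrivial (AddCircle p) :=
  nontrivial_of_ne ((p / (2 : ℕ) : ℝ) : AddCircle p) 0 fun h =>
    absurd (AddCircle.addOrderOf_period_div (p := p) two_pos) (by rw [h]; simp)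

theorem ae_neg_mem_upperHalfCircle_iff :
    ∀ᵐ x ∂(AddCircle.haarAddCircle (T := p)), -x ∈ upperHalfCircle p ↔ x ∉ upperHalfCircle p := by
  have hnull : AddCircle.haarAddCircle {x : AddCircle p | 2 • x = 0} = 0 :=
    (AddCircle.finite_torsion p two_pos).measure_zero _
  exact (measure_eq_zero_iff_ae_notMem.mp hnull).mono fun x => neg_mem_upperHalfCircle_iff

theorem measurePreserving_nsmul_haarAddCircle {n : ℕ} (hn : n ≠ 0) :
    MeasurePreserving (n • · : AddCircle p → AddCircle p) AddCircle.haarAddCircle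
      AddCircle.haarAddCircle := by
  simpa only [natCast_zsmul] using
    Measure.measurePreserving_zsmul AddCircle.haarAddCircle (Int.natCast_ne_zero.mpr hn)

end Circle

section CircleIntertwining

variable {p : ℝ} [Fact (0 < p)] {H : Type*} [NormedAddCommGroup H] [InnerProductSpace ℂ H]
  {U T : H ≃ₗᵢ[ℂ] H} {φ : H} {J : Lp ℂ 2 (AddCircle.haarAddCircle (T := p)) →ₗᵢ[ℂ] H}

theorem zpow_apply_eq_weightedComp_fourier (hJ : ∀ k : ℤ, J (fourierLp 2 k) = (T ^ k) φ) (l : ℤ)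
    (F : Lp ℂ 2 (AddCircle.haarAddCircle (T := p))) :
    (T ^ l) (J F) = J (weightedComp 2 (fourier l) (.id _) F) := by
  suffices ((T ^ l).toLinearIsometry.comp J).toContinuousLinearMap =
      J.toContinuousLinearMap.comp (weightedComp 2 (fourier l) (.id _)) from
    congr($this F)
  refine eq_of_eq_on_hilbertBasis fourierBasis fun k => ?_
  have hmul : weightedComp 2 (fourier l) (.id _) (fourierLp 2 k) =
      fourierLp (T := p) 2 (l + k) := by
    refine (weightedComp_toLp continuous_id (fourier l) (.id _) (fourier k)).trans ?_
    exact congrArg _ (ContinuousMap.ext fun x => fourier_add.symm)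
  simp [hJ, hmul, zpow_add]

theorem apply_eq_weightedComp_of_semiconjBy {N : ℕ} (hUT : SemiconjBy U T (T ^ N))
    (hN : MeasurePreserving (N • · : AddCircle p → AddCircle p) AddCircle.haarAddCircle
      AddCircle.haarAddCircle)
    (hJ : ∀ k : ℤ, J (fourierLp 2 k) = (T ^ k) φ) {m : C(AddCircle p, ℂ)}
    (hφ : U φ = J (ContinuousMap.toLp 2 _ ℂ m)) (F : Lp ℂ 2 (AddCircle.haarAddCircle (T := p))) :
    U (J F) = J (weightedComp 2 m hN F) := by
  suffices (U.toLinearIsometry.comp J).toContinuousLinearMap =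
      J.toContinuousLinearMap.comp (weightedComp 2 m hN) from
    congr($this F)
  refine eq_of_eq_on_hilbertBasis fourierBasis fun k => ?_
  have hUk : U ((T ^ k) φ) = (T ^ (N * k : ℤ)) (U φ) := by
    have h := hUT.zpow_right k
    rw [← zpow_natCast, ← zpow_mul] at h
    exact congr($h.eq φ)
  have hcomp : weightedComp 2 (fourier (N * k)) (.id _) (ContinuousMap.toLp 2 _ ℂ m) =
      weightedComp 2 m hN (fourierLp 2 k) := by
    refine (weightedComp_toLp continuous_id _ (.id _) m).trans
      (.trans (congrArg _ (ContinuousMap.ext fun x => ?_))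
        (weightedComp_toLp (continuous_nsmul N) m hN (fourier k)).symm)
    have hfourier : fourier (N * k) x = fourier k (N • x) := by
      rw [fourier_apply, fourier_apply, mul_comm, mul_zsmul, natCast_zsmul]
    exact (mul_comm _ _).trans (congrArg _ hfourier)
  simp [hJ, hUk, hφ, zpow_apply_eq_weightedComp_fourier hJ, hcomp]

end CircleIntertwining

section LowPassFilter

variable {p : ℝ} [Fact (0 < p)] {N : ℕ}

theorem exists_invariant_subspace_of_lowPassFilter {H : Type*} [NormedAddCommGroup H]
    [InnerProductSpace ℂ H] [CompleteSpace H] {U T : H ≃ₗᵢ[ℂ] H} {φ : H}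
    {J : Lp ℂ 2 (AddCircle.haarAddCircle (T := p)) →ₗᵢ[ℂ] H} {m : C(AddCircle p, ℂ)}
    {t : AddCircle p} {ρ : ℝ} (hN : N ≠ 0) (hUT : SemiconjBy U T (T ^ N))
    (hJ : ∀ k : ℤ, J (fourierLp 2 k) = (T ^ k) φ) (hφ : U φ = J (ContinuousMap.toLp 2 _ ℂ m))
    (hm : ∀ x, ‖m (-x)‖ = ‖m x‖) (ht : N • t = 0)
    (hsq : ∀ x, ∑ j ∈ range N, ‖m (x + j • t)‖ ^ 2 = N)
    (hsum : ∀ x, ∑ j ∈ range N, ‖m (x + j • t)‖ ≤ N * ρ) (hρ : ρ < 1) :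
    ∃ K : Submodule ℂ H, IsClosed (K : Set H) ∧ K ≠ ⊥ ∧ K ≠ ⊤ ∧
      ∀ f ∈ K, U f ∈ K ∧ U.symm f ∈ K ∧ T f ∈ K ∧ T.symm f ∈ K := by
  have hmp := measurePreserving_nsmul_haarAddCircle (p := p) hN
  have hρ0 : 0 ≤ ρ := nonneg_of_mul_nonneg_right
    ((sum_nonneg fun _ _ => norm_nonneg _).trans (hsum 0)) (by positivity)
  have hL1 (n : ℕ) : ∫ x, ‖birkhoffProd (N • ·) m n x‖ ∂AddCircle.haarAddCircle ≤ ρ ^ n := by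
    simp_rw [norm_birkhoffProd]
    exact integral_birkhoffProd_le_pow hmp hN ht m.continuous.norm (fun x => norm_nonneg _) hsum n
  have hL2 (n : ℕ) : ∫ x, ‖birkhoffProd (N • ·) m n x‖ ^ 2 ∂AddCircle.haarAddCircle = 1 := by
    simp_rw [norm_birkhoffProd, ← birkhoffProd_pow]
    exact integral_birkhoffProd_eq_one hmp hN ht (m.continuous.norm.pow 2) hsq n
  exact exists_invariant_subspace_of_swap hUT hmp (continuous_nsmul N)
    (apply_eq_weightedComp_of_semiconjBy hUT hmp hJ hφ)
    (fun F => by simpa using zpow_apply_eq_weightedComp_fourier hJ 1 F)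
    (fun F => by simpa using zpow_apply_eq_weightedComp_fourier hJ (-1) F)
    (σ := .neg _) (Measure.measurePreserving_neg _) (fun x => (smul_neg N x).symm) hm
    isOpen_upperHalfCircle.measurableSet ae_neg_mem_upperHalfCircle_iff hρ0 hρ hL1 one_pos
    fun n => (hL2 n).ge

end LowPassFilter

section CantorFilter

variable {p : ℝ}

theorem fourier_apply_nsmul (k : ℤ) (n : ℕ) (x : AddCircle p) :
    fourier k (n • x) = fourier k x ^ n := by
  rw [fourier_apply, fourier_apply, smul_comm, AddCircle.toCircle_nsmul, Circle.coe_pow]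

theorem fourier_apply_add (k : ℤ) (x y : AddCircle p) :
    fourier k (x + y) = fourier k x * fourier k y := by
  rw [fourier_apply, smul_add, AddCircle.toCircle_add, Circle.coe_mul, ← fourier_apply,
    ← fourier_apply]

theorem sum_fourier_add_nsmul_eq_zero (hp : p ≠ 0) {k : ℤ} {n : ℕ} {t : AddCircle p}
    (hnt : n • t = 0) (hkt : k • t ≠ 0) (x : AddCircle p) :
    ∑ j ∈ range n, fourier k (x + j • t) = 0 := by
  have hone : fourier k t ≠ 1 := fun h => hkt <| AddCircle.injective_toCircle hp <| Circle.ext <| by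
    simpa [fourier_apply] using h
  simp_rw [fourier_apply_add, fourier_apply_nsmul, ← mul_sum]
  rw [geom_sum_eq hone, ← fourier_apply_nsmul, hnt, fourier_eval_zero, sub_self, zero_div, mul_zero]

/-- The low-pass filter `m₀(z) = (1 + z²) / √2` of the Cantor set, as a function on `ℝ / pℤ`. -/
def cantorFilter (p : ℝ) : C(AddCircle p, ℂ) :=
  ((√2 : ℝ) : ℂ)⁻¹ • (fourier 0 + fourier 2)

-- `1 + w² = 2 (Re w) w` on the unit circle.
theorem norm_cantorFilter (x : AddCircle p) : ‖cantorFilter p x‖ = √2 * |(fourier 1 x).re| := by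
  set w := fourier 1 x
  have hsq : w * w = fourier 2 x := fourier_add.symm
  have hconj : w * star w = 1 := by
    rw [Complex.star_def, Complex.mul_conj', norm_fourier_apply, Complex.ofReal_one, one_pow]
  have hsum : fourier 0 x + fourier 2 x = w * (2 * w.re : ℝ) := by
    rw [← Complex.add_conj, mul_add, hsq, ← Complex.star_def, hconj, fourier_zero, add_comm]
  have hval : cantorFilter p x = ((√2 : ℝ) : ℂ)⁻¹ * (w * (2 * w.re : ℝ)) := by rw [← hsum]; rfl
  rw [hval, norm_mul, norm_mul, norm_fourier_apply, norm_inv, Complex.norm_real, Complex.norm_real,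
    Real.norm_of_nonneg (Real.sqrt_nonneg 2), norm_mul, Real.norm_two, Real.norm_eq_abs, one_mul,
    ← mul_assoc]
  congr 1
  field_simp
  simp

theorem norm_cantorFilter_neg (x : AddCircle p) : ‖cantorFilter p (-x)‖ = ‖cantorFilter p x‖ := by
  rw [norm_cantorFilter, norm_cantorFilter, fourier_apply_neg]
  rfl

theorem norm_sq_cantorFilter (x : AddCircle p) :
    ‖cantorFilter p x‖ ^ 2 = 1 + (fourier 2 x).re := by
  have hnorm : (fourier 1 x).re * (fourier 1 x).re + (fourier 1 x).im * (fourier 1 x).im = 1 := by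
    rw [← Complex.normSq_apply, ← Complex.sq_norm, norm_fourier_apply, one_pow]
  have hre : (fourier 2 x).re =
      (fourier 1 x).re * (fourier 1 x).re - (fourier 1 x).im * (fourier 1 x).im := by
    rw [← Complex.mul_re, ← fourier_add]
    rfl
  rw [norm_cantorFilter, mul_pow, Real.sq_sqrt zero_le_two, sq_abs, hre]
  linear_combination hnorm

theorem abs_re_fourier_apply_le_one (k : ℤ) (x : AddCircle p) : |(fourier k x).re| ≤ 1 :=
  (Complex.abs_re_le_norm _).trans (norm_fourier_apply k x).le

theorem sum_re_fourier_add_nsmul_eq_zero (hp : p ≠ 0) {k : ℤ} {t : AddCircle p}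
    (hk : ¬ (addOrderOf t : ℤ) ∣ k) (x : AddCircle p) :
    ∑ j ∈ range (addOrderOf t), (fourier k (x + j • t)).re = 0 := by
  rw [← Complex.re_sum, sum_fourier_add_nsmul_eq_zero hp (addOrderOf_nsmul_eq_zero t)
    (mt addOrderOf_dvd_iff_zsmul_eq_zero.mpr hk), Complex.zero_re]

theorem sum_norm_sq_cantorFilter (hp : p ≠ 0) {t : AddCircle p} (ht : addOrderOf t = 3)
    (x : AddCircle p) : ∑ j ∈ range 3, ‖cantorFilter p (x + j • t)‖ ^ 2 = 3 := by
  have hsum := sum_re_fourier_add_nsmul_eq_zero hp (k := 2) (t := t) (by rw [ht]; decide) x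
  rw [ht] at hsum
  simp_rw [norm_sq_cantorFilter, sum_add_distrib, hsum]
  simp

theorem abs_add_abs_add_abs_le_two {a b c : ℝ} (ha : |a| ≤ 1) (hb : |b| ≤ 1) (hc : |c| ≤ 1)
    (habc : a + b + c = 0) : |a| + |b| + |c| ≤ 2 := by
  grind

theorem sum_norm_cantorFilter_le (hp : p ≠ 0) {t : AddCircle p} (ht : addOrderOf t = 3)
    (x : AddCircle p) : ∑ j ∈ range 3, ‖cantorFilter p (x + j • t)‖ ≤ 2 * √2 := by
  have hsum := sum_re_fourier_add_nsmul_eq_zero hp (k := 1) (t := t) (by rw [ht]; decide) x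
  rw [ht, sum_range_succ, sum_range_succ, sum_range_one] at hsum
  simp_rw [norm_cantorFilter]
  rw [← mul_sum, sum_range_succ, sum_range_succ, sum_range_one, mul_comm]
  gcongr
  exact abs_add_abs_add_abs_le_two (abs_re_fourier_apply_le_one 1 _)
    (abs_re_fourier_apply_le_one 1 _) (abs_re_fourier_apply_le_one 1 _) hsum

end CantorFilter

section CantorHausdorffMeasure

theorem cantorDim_pos : 0 < cantorDim :=
  div_pos (Real.log_pos one_lt_two) (Real.log_pos (by norm_num))

theorem three_rpow_cantorDim : (3 : ℝ) ^ cantorDim = 2 :=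
  Real.rpow_logb three_pos (by norm_num) two_pos

theorem inv_three_pow_rpow_cantorDim (n : ℕ) :
    (((3 : ℝ) ^ n)⁻¹) ^ cantorDim = ((2 : ℝ) ^ n)⁻¹ := by
  rw [Real.inv_rpow (by positivity), ← Real.rpow_pow_comm zero_le_three, three_rpow_cantorDim]

theorem inv_pow_succ_le_ofDigits_sub_ofDigits {b : ℕ} {x y : ℕ → Fin b} {n : ℕ}
    (hlt : ∀ i < n, x i = y i) (hn : (y n : ℕ) + 2 ≤ x n) :
    ((b : ℝ) ^ (n + 1))⁻¹ ≤ Real.ofDigits x - Real.ofDigits y := by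
  have hinit : ∑ i ∈ range n, Real.ofDigitsTerm x i = ∑ i ∈ range n, Real.ofDigitsTerm y i :=
    sum_congr rfl fun i hi => by rw [Real.ofDigitsTerm, Real.ofDigitsTerm, hlt i (mem_range.mp hi)]
  have hdigit : Real.ofDigitsTerm y n + 2 * ((b : ℝ) ^ (n + 1))⁻¹ ≤ Real.ofDigitsTerm x n := by
    rw [Real.ofDigitsTerm, Real.ofDigitsTerm, ← add_mul]
    gcongr
    exact_mod_cast hn
  have htail_x : 0 ≤ ((b : ℝ) ^ (n + 1))⁻¹ * Real.ofDigits fun i => x (i + (n + 1)) :=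
    mul_nonneg (by positivity) (Real.ofDigits_nonneg _)
  have htail_y : ((b : ℝ) ^ (n + 1))⁻¹ * Real.ofDigits (fun i => y (i + (n + 1))) ≤
      ((b : ℝ) ^ (n + 1))⁻¹ :=
    mul_le_of_le_one_right (by positivity) (Real.ofDigits_le_one _)
  rw [Real.ofDigits_eq_sum_add_ofDigits x (n + 1), Real.ofDigits_eq_sum_add_ofDigits y (n + 1),
    sum_range_succ, sum_range_succ, hinit]
  linarith

variable {x y : ℝ} {n : ℕ}

theorem cantorToTernary_get_congr (h : (cantorToBinary x).get n = (cantorToBinary y).get n) :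
    (cantorToTernary x).get n = (cantorToTernary y).get n := by
  rw [cantorToTernary, cantorToTernary, Stream'.get_map, Stream'.get_map, h]

theorem abs_sub_le_inv_three_pow (hx : x ∈ cantorSet) (hy : y ∈ cantorSet)
    (h : ∀ i < n, (cantorToBinary x).get i = (cantorToBinary y).get i) :
    |x - y| ≤ ((3 : ℝ) ^ n)⁻¹ := by
  rw [← ofDigits_cantorToTernary hx, ← ofDigits_cantorToTernary hy]
  exact mod_cast Real.abs_ofDigits_sub_ofDigits_le fun i hi => cantorToTernary_get_congr (h i hi)

theorem inv_three_pow_succ_le_abs_sub (hx : x ∈ cantorSet) (hy : y ∈ cantorSet)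
    (hlt : ∀ i < n, (cantorToBinary x).get i = (cantorToBinary y).get i)
    (hn : (cantorToBinary x).get n ≠ (cantorToBinary y).get n) :
    ((3 : ℝ) ^ (n + 1))⁻¹ ≤ |x - y| := by
  wlog hyx : (cantorToBinary y).get n = false ∧ (cantorToBinary x).get n = true generalizing x y
  · rw [abs_sub_comm]
    exact this hy hx (fun i hi => (hlt i hi).symm) hn.symm (by grind)
  rw [← ofDigits_cantorToTernary hx, ← ofDigits_cantorToTernary hy]
  refine le_trans (mod_cast inv_pow_succ_le_ofDigits_sub_ofDigits
    (fun i hi => cantorToTernary_get_congr (hlt i hi)) ?_) (le_abs_self _)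
  simp [cantorToTernary, Stream'.get_map, hyx]

/-- The set of points of the Cantor set whose ternary expansion starts with the digits prescribed
by `a`, where `true` stands for the digit `2`. -/
def cantorCylinder (a : Fin n → Bool) : Set ℝ :=
  {x ∈ cantorSet | ∀ j : Fin n, (cantorToBinary x).get j = a j}

theorem ediam_cantorCylinder_le (a : Fin n → Bool) :
    Metric.ediam (cantorCylinder a) ≤ ENNReal.ofReal ((3 : ℝ) ^ n)⁻¹ := by
  refine Metric.ediam_le fun x hx y hy => ?_
  rw [edist_dist, Real.dist_eq]
  gcongr
  exact abs_sub_le_inv_three_pow hx.1 hy.1 fun i hi =>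
    (hx.2 ⟨i, hi⟩).trans (hy.2 ⟨i, hi⟩).symm

theorem sum_ediam_cantorCylinder_rpow_le_one (n : ℕ) :
    ∑ a : Fin n → Bool, Metric.ediam (cantorCylinder a) ^ cantorDim ≤ 1 := by
  have hterm (a : Fin n → Bool) :
      Metric.ediam (cantorCylinder a) ^ cantorDim ≤ ((2 : ℝ≥0∞) ^ n)⁻¹ := by
    refine (ENNReal.rpow_le_rpow (ediam_cantorCylinder_le a) cantorDim_pos.le).trans_eq ?_
    rw [ENNReal.ofReal_rpow_of_nonneg (by positivity) cantorDim_pos.le,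
      inv_three_pow_rpow_cantorDim, ENNReal.ofReal_inv_of_pos (by positivity),
      ENNReal.ofReal_pow zero_le_two, ENNReal.ofReal_ofNat]
  calc ∑ a : Fin n → Bool, Metric.ediam (cantorCylinder a) ^ cantorDim
      ≤ ∑ _a : Fin n → Bool, ((2 : ℝ≥0∞) ^ n)⁻¹ := sum_le_sum fun a _ => hterm a
    _ = 2 ^ n * ((2 : ℝ≥0∞) ^ n)⁻¹ := by simp
    _ = 1 := ENNReal.mul_inv_cancel (by simp) (by simp)

theorem hausdorffMeasure_cantorSet_le_one : Measure.hausdorffMeasure cantorDim cantorSet ≤ 1 := by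
  have hlim : Tendsto (fun n : ℕ => ENNReal.ofReal ((3 : ℝ) ^ n)⁻¹) atTop (𝓝 0) := by
    rw [← ENNReal.ofReal_zero]
    exact ENNReal.tendsto_ofReal (tendsto_inv_atTop_zero.comp
      (tendsto_pow_atTop_atTop_of_one_lt (by norm_num)))
  have hcover (n : ℕ) : cantorSet ⊆ ⋃ a : Fin n → Bool, cantorCylinder a := fun x hx =>
    Set.mem_iUnion.mpr ⟨fun j => (cantorToBinary x).get j, hx, fun _ => rfl⟩
  calc Measure.hausdorffMeasure cantorDim cantorSet
      ≤ liminf (fun n => ∑ a : Fin n → Bool, Metric.ediam (cantorCylinder a) ^ cantorDim) atTop :=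
        Measure.hausdorffMeasure_le_liminf_sum cantorDim cantorSet _ hlim _
          (.of_forall fun _ => ediam_cantorCylinder_le) (.of_forall hcover)
    _ ≤ liminf (fun _ : ℕ => (1 : ℝ≥0∞)) atTop :=
        liminf_le_liminf (.of_forall sum_ediam_cantorCylinder_rpow_le_one)
    _ = 1 := liminf_const 1

/-- The Cantor function on the Cantor set: replace the ternary digit `2` by the binary digit `1`.
Its values outside `cantorSet` are irrelevant. -/
def cantorFunction (x : ℝ) : ℝ :=
  Real.ofDigits (b := 2) fun n => cond ((cantorToBinary x).get n) 1 0

theorem abs_cantorFunction_sub_le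
    (h : ∀ i < n, (cantorToBinary x).get i = (cantorToBinary y).get i) :
    |cantorFunction x - cantorFunction y| ≤ ((2 : ℝ) ^ n)⁻¹ :=
  mod_cast Real.abs_ofDigits_sub_ofDigits_le fun i hi => by rw [h i hi]

theorem abs_cantorFunction_sub_le_mul_rpow (hx : x ∈ cantorSet) (hy : y ∈ cantorSet) :
    |cantorFunction x - cantorFunction y| ≤ 2 * |x - y| ^ cantorDim := by
  rcases eq_or_ne x y with rfl | hxy
  · simp [Real.zero_rpow cantorDim_pos.ne']
  have hne : (cantorToBinary x).get ≠ (cantorToBinary y).get := fun h =>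
    hxy <| congrArg Subtype.val <|
      cantorSetEquivNatToBool.injective (a₁ := ⟨x, hx⟩) (a₂ := ⟨y, hy⟩) h
  set n := PiNat.firstDiff (cantorToBinary x).get (cantorToBinary y).get
  have hlt (i : ℕ) (hi : i < n) := PiNat.apply_eq_of_lt_firstDiff hi
  calc |cantorFunction x - cantorFunction y|
      ≤ ((2 : ℝ) ^ n)⁻¹ := abs_cantorFunction_sub_le hlt
    _ = 2 * (((3 : ℝ) ^ (n + 1))⁻¹) ^ cantorDim := by
        rw [inv_three_pow_rpow_cantorDim, pow_succ]
        field_simp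
    _ ≤ 2 * |x - y| ^ cantorDim := by
        gcongr
        · exact cantorDim_pos.le
        · exact inv_three_pow_succ_le_abs_sub hx hy hlt (PiNat.apply_firstDiff_ne hne)

theorem holderOnWith_cantorFunction :
    HolderOnWith 2 (NNReal.mk cantorDim cantorDim_pos.le) cantorFunction cantorSet := by
  intro x hx y hy
  rw [edist_dist, edist_dist, Real.dist_eq, Real.dist_eq, NNReal.coe_mk,
    ENNReal.ofReal_rpow_of_nonneg (abs_nonneg _) cantorDim_pos.le, ENNReal.coe_ofNat,
    ← ENNReal.ofReal_ofNat, ← ENNReal.ofReal_mul zero_le_two]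
  exact ENNReal.ofReal_le_ofReal (abs_cantorFunction_sub_le_mul_rpow hx hy)

theorem surjOn_cantorFunction : Set.SurjOn cantorFunction cantorSet (Set.Icc 0 1) := by
  intro t ht
  obtain ⟨d, -, rfl⟩ := Real.ofDigits_SurjOn one_lt_two ht
  set c : cantorSet := cantorSetEquivNatToBool.symm fun n => decide (d n = 1)
  have hget : (cantorToBinary c).get = fun n => decide (d n = 1) :=
    cantorSetEquivNatToBool.apply_symm_apply _
  refine ⟨c, c.2, congrArg Real.ofDigits (funext fun n => ?_)⟩
  rw [hget]
  rcases Fin.exists_fin_two.mp ⟨d n, rfl⟩ with h | h <;> simp [h]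

theorem hausdorffMeasure_cantorSet_pos : 0 < Measure.hausdorffMeasure cantorDim cantorSet := by
  refine pos_iff_ne_zero.mpr fun hzero => ?_
  have himage : volume (cantorFunction '' cantorSet) = 0 := by
    simpa [hzero, hausdorffMeasure_real] using
      holderOnWith_cantorFunction.hausdorffMeasure_image_le (d := 1) cantorDim_pos zero_le_one
  have hunit := (measure_mono surjOn_cantorFunction).trans himage.le
  rw [Real.volume_Icc] at hunit
  norm_num at hunit

end CantorHausdorffMeasure

section CantorMeasure

theorem cantorSet_subset_cantorTranslates : cantorSet ⊆ cantorTranslates := fun x hx =>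
  Set.mem_iUnion₂.mpr ⟨0, 0, x, hx, by simp⟩

theorem div_three_mem_cantorSet_iff {x : ℝ} :
    x / 3 ∈ cantorSet ↔ x ∈ cantorSet ∨ x - 2 ∈ cantorSet := by
  conv_lhs => rw [cantorSet_eq_union_halves]
  refine or_congr ⟨?_, fun h => ⟨x, h, rfl⟩⟩ ⟨?_, fun h => ⟨x - 2, h, by ring⟩⟩
  · rintro ⟨y, hy, hyx⟩
    rwa [← (div_left_inj' three_ne_zero).mp hyx]
  · rintro ⟨y, hy, hyx⟩
    rwa [← (div_left_inj' three_ne_zero).mp hyx, add_sub_cancel_left]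

theorem eq_one_of_mem_cantorSet_of_sub_mem_cantorSet {x r : ℝ} (hr : 1 ≤ r) (hx : x ∈ cantorSet)
    (hxr : x - r ∈ cantorSet) : x = 1 := by
  have hle := (cantorSet_subset_unitInterval hx).2
  have hge := (cantorSet_subset_unitInterval hxr).1
  linarith

theorem mapsTo_div_three_cantorTranslates :
    Set.MapsTo (· / 3) cantorTranslates cantorTranslates := by
  intro x hx
  obtain ⟨k, n, c, hc, rfl⟩ := Set.mem_iUnion₂.mp hx
  refine Set.mem_iUnion₂.mpr ⟨k, n + 1, c / 3, div_three_mem_cantorSet_iff.mpr (.inl hc), ?_⟩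
  simp only [zpow_add_one₀ (three_ne_zero' ℝ)]
  ring

theorem mapsTo_sub_one_cantorTranslates :
    Set.MapsTo (· - 1) cantorTranslates cantorTranslates := by
  intro x hx
  obtain ⟨k, n, c, hc, rfl⟩ := Set.mem_iUnion₂.mp hx
  rcases n with n | n
  · refine Set.mem_iUnion₂.mpr ⟨k - 3 ^ n, n, c, hc, ?_⟩
    simp [sub_div, add_sub_assoc]
  · refine Set.mem_iUnion₂.mpr ⟨k * 3 ^ (n + 1) - 1, 0, c, hc, ?_⟩
    simp [zpow_negSucc, add_sub_assoc]

theorem quasiMeasurePreserving_hausdorffMeasure {X Y : Type*} [EMetricSpace X] [EMetricSpace Y]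
    [MeasurableSpace X] [BorelSpace X] [MeasurableSpace Y] [BorelSpace Y] {f : X → Y} {K : ℝ≥0}
    {d : ℝ} (hmeas : Measurable f) (hf : AntilipschitzWith K f) (hd : 0 ≤ d) :
    Measure.QuasiMeasurePreserving f (Measure.hausdorffMeasure d)
      (Measure.hausdorffMeasure d) := by
  refine ⟨hmeas, .mk fun s hs hzero => ?_⟩
  rw [Measure.map_apply hmeas hs]
  simpa [hzero] using hf.hausdorffMeasure_preimage_le hd s

theorem quasiMeasurePreserving_div_three :
    Measure.QuasiMeasurePreserving (· / 3) cantorMeasure cantorMeasure := by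
  refine (quasiMeasurePreserving_hausdorffMeasure (K := 3) (by fun_prop) ?_
    cantorDim_pos.le).restrict mapsTo_div_three_cantorTranslates
  refine AntilipschitzWith.of_le_mul_dist fun x y => ?_
  rw [Real.dist_eq, Real.dist_eq, ← sub_div, abs_div, Nat.abs_ofNat, NNReal.coe_ofNat,
    mul_div_cancel₀ _ three_ne_zero]

theorem quasiMeasurePreserving_sub_one :
    Measure.QuasiMeasurePreserving (· - 1) cantorMeasure cantorMeasure :=
  (quasiMeasurePreserving_hausdorffMeasure (by fun_prop)
    (IsometryEquiv.subRight (1 : ℝ)).isometry.antilipschitz cantorDim_pos.le).restrict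
    mapsTo_sub_one_cantorTranslates

theorem cantorMeasure_cantorSet :
    cantorMeasure cantorSet = Measure.hausdorffMeasure cantorDim cantorSet := by
  rw [cantorMeasure, Measure.restrict_apply isClosed_cantorSet.measurableSet,
    Set.inter_eq_left.mpr cantorSet_subset_cantorTranslates]

theorem cantorMeasure_cantorSet_ne_top : cantorMeasure cantorSet ≠ ⊤ :=
  ne_top_of_le_ne_top ENNReal.one_ne_top
    (cantorMeasure_cantorSet.trans_le hausdorffMeasure_cantorSet_le_one)

theorem cantorMeasure_real_cantorSet_pos : 0 < cantorMeasure.real cantorSet :=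
  ENNReal.toReal_pos (cantorMeasure_cantorSet ▸ hausdorffMeasure_cantorSet_pos.ne')
    cantorMeasure_cantorSet_ne_top

instance nullSingletonClass_cantorMeasure : NullSingletonClass cantorMeasure :=
  have := Measure.nullSingletonClass_hausdorff ℝ cantorDim_pos
  Measure.restrict.instNullSingletonClass _

end CantorMeasure

section CantorScalingFunction

/-- The scaling function of the Cantor wavelets: the indicator of the Cantor set, normalised in
`L²` so that no use is made of the exact value of the Hausdorff measure of the Cantor set. -/
def cantorScalingFunction : Lp ℂ 2 cantorMeasure :=
  indicatorConstLp 2 isClosed_cantorSet.measurableSet cantorMeasure_cantorSet_ne_top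
    ((√(cantorMeasure.real cantorSet) : ℝ) : ℂ)⁻¹

theorem norm_cantorScalingFunction : ‖cantorScalingFunction‖ = 1 := by
  have hpos := Real.sqrt_pos.mpr cantorMeasure_real_cantorSet_pos
  rw [cantorScalingFunction, norm_indicatorConstLp two_ne_zero ENNReal.ofNat_ne_top,
    ENNReal.toReal_ofNat, ← Real.sqrt_eq_rpow, norm_inv, Complex.norm_real,
    Real.norm_of_nonneg hpos.le, inv_mul_cancel₀ hpos.ne']

theorem cantorScalingFunction_ae_eq : ⇑cantorScalingFunction =ᵐ[cantorMeasure]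
    cantorSet.indicator fun _ => ((√(cantorMeasure.real cantorSet) : ℝ) : ℂ)⁻¹ :=
  indicatorConstLp_coeFn

variable {U T : Lp ℂ 2 cantorMeasure ≃ₗᵢ[ℂ] Lp ℂ 2 cantorMeasure}

theorem pow_translation_ae_eq
    (hT : ∀ f : Lp ℂ 2 cantorMeasure, ⇑(T f) =ᵐ[cantorMeasure] fun x => f (x - 1))
    {f : Lp ℂ 2 cantorMeasure} {g : ℝ → ℂ} (hfg : ⇑f =ᵐ[cantorMeasure] g) (k : ℕ) :
    ⇑((T ^ k) f) =ᵐ[cantorMeasure] fun x => g (x - k) := by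
  induction k with
  | zero => simpa using hfg
  | succ k ih =>
    rw [pow_succ']
    refine (hT ((T ^ k) f)).trans ?_
    filter_upwards [quasiMeasurePreserving_sub_one.ae ih] with x hx
    rw [hx, sub_sub, add_comm, Nat.cast_succ]

theorem semiconjBy_dilation_translation
    (hU : ∀ f : Lp ℂ 2 cantorMeasure,
      ⇑(U f) =ᵐ[cantorMeasure] fun x => ((√2 : ℝ) : ℂ)⁻¹ * f (x / 3))
    (hT : ∀ f : Lp ℂ 2 cantorMeasure, ⇑(T f) =ᵐ[cantorMeasure] fun x => f (x - 1)) :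
    SemiconjBy U T (T ^ 3) := by
  refine LinearIsometryEquiv.ext fun f => Lp.ext ?_
  filter_upwards [hU (T f), quasiMeasurePreserving_div_three.ae (hT f),
    pow_translation_ae_eq hT (hU f) 3] with x hUT hTf hTU
  refine hUT.trans (.trans ?_ hTU.symm)
  rw [hTf]
  congr 2
  push_cast
  ring

theorem dilation_cantorScalingFunction
    (hU : ∀ f : Lp ℂ 2 cantorMeasure,
      ⇑(U f) =ᵐ[cantorMeasure] fun x => ((√2 : ℝ) : ℂ)⁻¹ * f (x / 3))
    (hT : ∀ f : Lp ℂ 2 cantorMeasure, ⇑(T f) =ᵐ[cantorMeasure] fun x => f (x - 1)) :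
    U cantorScalingFunction = ((√2 : ℝ) : ℂ)⁻¹ •
      (cantorScalingFunction + (T ^ 2) cantorScalingFunction) := by
  set c : ℂ := ((√(cantorMeasure.real cantorSet) : ℝ) : ℂ)⁻¹ with hc
  have hrefine (x : ℝ) : cantorSet.indicator (fun _ => c) (x / 3) =
      cantorSet.indicator (fun _ => c) x + cantorSet.indicator (fun _ => c) (x - 2) := by
    have hdisj (hx : x ∈ cantorSet) : x - 2 ∉ cantorSet := fun hx' => by
      have := (cantorSet_subset_unitInterval hx).2
      have := (cantorSet_subset_unitInterval hx').1
      linarith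
    by_cases hx : x ∈ cantorSet
    · simp [Set.indicator, div_three_mem_cantorSet_iff, hx, hdisj hx]
    · by_cases hx2 : x - 2 ∈ cantorSet <;>
        simp [Set.indicator, div_three_mem_cantorSet_iff, hx, hx2]
  refine Lp.ext ((hU cantorScalingFunction).trans ?_)
  filter_upwards [quasiMeasurePreserving_div_three.ae cantorScalingFunction_ae_eq,
    cantorScalingFunction_ae_eq, pow_translation_ae_eq hT cantorScalingFunction_ae_eq 2,
    Lp.coeFn_smul ((√2 : ℝ) : ℂ)⁻¹ (cantorScalingFunction + (T ^ 2) cantorScalingFunction),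
    Lp.coeFn_add cantorScalingFunction ((T ^ 2) cantorScalingFunction)]
    with x hdiv hφ htrans hsmul hadd
  rw [hsmul, Pi.smul_apply, hadd, Pi.add_apply, hdiv, hφ, htrans, ← hc, hrefine, smul_eq_mul,
    Nat.cast_ofNat]

theorem inner_pow_translation_cantorScalingFunction
    (hT : ∀ f : Lp ℂ 2 cantorMeasure, ⇑(T f) =ᵐ[cantorMeasure] fun x => f (x - 1)) (k : ℕ)
    (hk : k ≠ 0) : ⟪cantorScalingFunction, (T ^ k) cantorScalingFunction⟫_ℂ = 0 := by
  rw [L2.inner_def]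
  refine integral_eq_zero_of_ae ?_
  filter_upwards [cantorScalingFunction_ae_eq,
    pow_translation_ae_eq hT cantorScalingFunction_ae_eq k,
    Measure.ae_ne cantorMeasure 1] with x hφ htrans hx1
  have hdisj (hx : x ∈ cantorSet) : x - k ∉ cantorSet := fun hxk => hx1 <|
    eq_one_of_mem_cantorSet_of_sub_mem_cantorSet (mod_cast Nat.one_le_iff_ne_zero.mpr hk) hx hxk
  rw [hφ, htrans]
  by_cases hx : x ∈ cantorSet
  · rw [Set.indicator_of_notMem (hdisj hx), inner_zero_right, Pi.zero_apply]
  · rw [Set.indicator_of_notMem hx, inner_zero_left, Pi.zero_apply]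

end CantorScalingFunction

/-- **Packer's question.** On `H = L²(ℛ, ℋ^s)`, the representation generated by the unitary
dilation `(U f)(x) = 2^{-1/2} f(x/3)` and the unitary translation `(T f)(x) = f(x - 1)` is
reducible: it admits a nontrivial proper closed invariant subspace. -/
theorem cantor_wavelet_representation_reducible
    (U T : Lp ℂ 2 cantorMeasure ≃ₗᵢ[ℂ] Lp ℂ 2 cantorMeasure)
    (hU : ∀ f : Lp ℂ 2 cantorMeasure,
      ⇑(U f) =ᵐ[cantorMeasure] fun x => ((Real.sqrt 2 : ℝ) : ℂ)⁻¹ * f (x / 3))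
    (hT : ∀ f : Lp ℂ 2 cantorMeasure, ⇑(T f) =ᵐ[cantorMeasure] fun x => f (x - 1)) :
    ∃ K : Submodule ℂ (Lp ℂ 2 cantorMeasure),
      IsClosed (K : Set (Lp ℂ 2 cantorMeasure)) ∧ K ≠ ⊥ ∧ K ≠ ⊤ ∧
      ∀ f ∈ K, U f ∈ K ∧ U.symm f ∈ K ∧ T f ∈ K ∧ T.symm f ∈ K := by
  have hortho : Orthonormal ℂ fun k : ℤ => (T ^ k) cantorScalingFunction :=
    orthonormal_zpow_apply norm_cantorScalingFunction
      (inner_pow_translation_cantorScalingFunction hT)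
  obtain ⟨J, hJ⟩ := exists_linearIsometry_apply_hilbertBasis (fourierBasis (T := 1)) hortho
  rw [coe_fourierBasis] at hJ
  have hφ : U cantorScalingFunction = J (ContinuousMap.toLp 2 _ ℂ (cantorFilter 1)) := by
    rw [dilation_cantorScalingFunction hU hT, cantorFilter]
    simp only [map_smul, map_add, hJ]
    rfl
  have ht : addOrderOf ((1 / (3 : ℕ) : ℝ) : AddCircle (1 : ℝ)) = 3 :=
    AddCircle.addOrderOf_period_div three_pos
  have hρ : 2 * √2 / 3 < 1 := by
    rw [div_lt_one three_pos, ← lt_div_iff₀' two_pos, Real.sqrt_lt' (by norm_num)]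
    norm_num
  refine exists_invariant_subspace_of_lowPassFilter three_ne_zero
    (semiconjBy_dilation_translation hU hT) hJ hφ norm_cantorFilter_neg
    (addOrderOf_dvd_iff_nsmul_eq_zero.mp ht.dvd) (sum_norm_sq_cantorFilter one_ne_zero ht)
    (fun x => ?_) hρ
  exact (sum_norm_cantorFilter_le one_ne_zero ht x).trans_eq (by push_cast; ring)
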